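/- arXiv:2005.06905 — 3 statements merged into one kernel-verified Lean document; each statement's English description precedes it below -/
import Mathlib

section
/- As t ↑ T, √λ_t · ⟨f_t⊗₁f_t, f_t⟩ converges to 3/(4(2α−1)); equivalently, ⟨f_t⊗₁f_t, f_t⟩ = 3/(4(2α−1)√λ_t) + o(1/√λ_t). -/
open MeasureTheory Real Filter Topology

/-- `λ_t := |log(T−t)|/(2α−1)`. -/
noncomputable def lam (T α t : ℝ) : ℝ := |Real.log (T - t)| / (2 * α - 1)

/-- The kernel `f_t`. -/
noncomputable def fker (T α t : ℝ) (u v : ℝ) : ℝ :=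
  if u ∈ Set.Icc (0:ℝ) t ∧ v ∈ Set.Icc (0:ℝ) t then
    (1 / (2 * Real.sqrt (lam T α t))) * (T - max u v) ^ (α - 1) * (T - min u v) ^ (-α)
  else 0

/-- The kernel `g_t`. -/
noncomputable def gker (T α t : ℝ) (u v : ℝ) : ℝ :=
  if u ∈ Set.Icc (0:ℝ) t ∧ v ∈ Set.Icc (0:ℝ) t then
    (T - u) ^ (-α) * (T - v) ^ (-α) *
      ((T - max u v) ^ (2 * α - 1) - (T - t) ^ (2 * α - 1)) / |Real.log (T - t)|
  else 0

/-- `⟨p,q⟩ := ∫_{[0,T]²} p(u,v) q(u,v) du dv`. -/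
noncomputable def ip (T : ℝ) (p q : ℝ → ℝ → ℝ) : ℝ :=
  ∫ u in Set.Icc (0:ℝ) T, ∫ v in Set.Icc (0:ℝ) T, p u v * q u v

/-- `‖p‖² := ⟨p,p⟩`. -/
noncomputable def normSq (T : ℝ) (p : ℝ → ℝ → ℝ) : ℝ := ip T p p

/-- The contraction `(p ⊗₁ q)(x,y) := ∫₀^T p(x,u) q(y,u) du`. -/
noncomputable def contr (T : ℝ) (p q : ℝ → ℝ → ℝ) : ℝ → ℝ → ℝ :=
  fun x y => ∫ u in Set.Icc (0:ℝ) T, p x u * q y u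

/-- `b_t := (1/λ_t)·∫₀ᵗ ∫₀ˢ (T−s)^{2α−2}(T−u)^{−2α} du ds`. -/
noncomputable def bfun (T α t : ℝ) : ℝ :=
  (1 / lam T α t) *
    ∫ s in (0:ℝ)..t, ∫ u in (0:ℝ)..s, (T - s) ^ (2 * α - 2) * (T - u) ^ (-(2 * α))

/-- `A_{t,1}`. -/
noncomputable def A1 (T α t : ℝ) : ℝ :=
  (1 / (lam T α t) ^ 2) *
    ∫ x4 in (0:ℝ)..t, ∫ x3 in (0:ℝ)..x4, ∫ x2 in (0:ℝ)..x3, ∫ x1 in (0:ℝ)..x2,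
      (T - x4) ^ (2 * α - 2) * (T - x3) ^ (-1 : ℝ) * (T - x2) ^ (-1 : ℝ) *
        (T - x1) ^ (-(2 * α))

/-- `A_{t,2}`. -/
noncomputable def A2 (T α t : ℝ) : ℝ :=
  (1 / (2 * (lam T α t) ^ 2)) *
    ∫ x4 in (0:ℝ)..t, ∫ x2 in (0:ℝ)..x4, ∫ x3 in (0:ℝ)..x2, ∫ x1 in (0:ℝ)..x3,
      (T - x4) ^ (2 * α - 2) * (T - x2) ^ (2 * α - 2) * (T - x3) ^ (-(2 * α)) *
        (T - x1) ^ (-(2 * α))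

/-!
In the clock `s = -log (T - u)` the measure `du / (T - u)` becomes `ds`, and
`f_t(u,v) √(T-u) √(T-v)` becomes `exp (-β|s-s'|/2) / (2√λ_t)` with `β = 2α - 1`. Hence
`⟨f_t ⊗₁ f_t, f_t⟩` is `(2√λ_t)⁻³` times the integral of
`exp (-β(|x-y| + |y-z| + |z-x|)/2)` over a cube whose side `L` satisfies `L / λ_t → β`.
By symmetry this integral is six times the one over `z ≤ y ≤ x`, where the integrand is
`exp (-β(x-z))`, so it grows like `6L/β²`.
-/

section OrderedIntegrals

variable {E : Type*} [NormedAddCommGroup E] [NormedSpace ℝ E]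

theorem integral_integral_swap_triangle_of_le {g : ℝ → ℝ → E} (hg : Continuous g.uncurry)
    {a b : ℝ} (hab : a ≤ b) :
    ∫ x in a..b, ∫ y in x..b, g x y = ∫ y in a..b, ∫ x in a..y, g x y := by
  let F : ℝ → ℝ → E := fun x y => {p : ℝ × ℝ | p.1 ≤ p.2}.indicator g.uncurry (x, y)
  have hF : Integrable F.uncurry
      ((volume.restrict (Set.Ioc a b)).prod (volume.restrict (Set.Ioc a b))) := by
    rw [Measure.prod_restrict]
    refine Integrable.indicator ?_ (measurableSet_le measurable_fst measurable_snd)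
    exact (hg.continuousOn.integrableOn_compact (isCompact_Icc.prod isCompact_Icc)).mono_set
      (Set.prod_mono Set.Ioc_subset_Icc_self Set.Ioc_subset_Icc_self)
  have integral_snd : ∀ x ∈ Set.Ioc a b, ∫ y in Set.Ioc a b, F x y = ∫ y in x..b, g x y := by
    intro x hx
    have hFx : F x = (Set.Ici x).indicator (g x) := rfl
    have hset : Set.Ioc a b ∩ Set.Ici x = Set.Icc x b := by grind
    rw [hFx, setIntegral_indicator measurableSet_Ici, hset, integral_Icc_eq_integral_Ioc,
      intervalIntegral.integral_of_le hx.2]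
  have integral_fst : ∀ y ∈ Set.Ioc a b, ∫ x in Set.Ioc a b, F x y = ∫ x in a..y, g x y := by
    intro y hy
    have hFy : (fun x => F x y) = (Set.Iic y).indicator fun x => g x y := rfl
    rw [hFy, setIntegral_indicator measurableSet_Iic, Set.Ioc_inter_Iic, min_eq_right hy.2,
      intervalIntegral.integral_of_le hy.1.le]
  rw [intervalIntegral.integral_of_le hab, intervalIntegral.integral_of_le hab,
    ← setIntegral_congr_fun measurableSet_Ioc integral_snd,
    ← setIntegral_congr_fun measurableSet_Ioc integral_fst]
  exact integral_integral_swap hF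

theorem integral_integral_swap_triangle {g : ℝ → ℝ → E} (hg : Continuous g.uncurry) (a b : ℝ) :
    ∫ x in a..b, ∫ y in x..b, g x y = ∫ y in a..b, ∫ x in a..y, g x y := by
  obtain hab | hba := le_total a b
  · exact integral_integral_swap_triangle_of_le hg hab
  · calc ∫ x in a..b, ∫ y in x..b, g x y
        = ∫ x in b..a, ∫ y in b..x, g x y := by
          rw [intervalIntegral.integral_symm, ← intervalIntegral.integral_neg]
          simp only [← intervalIntegral.integral_symm]
      _ = ∫ y in b..a, ∫ x in y..a, g x y :=
          (integral_integral_swap_triangle_of_le (g := fun y x => g x y)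
            (hg.comp continuous_swap) hba).symm
      _ = ∫ y in a..b, ∫ x in a..y, g x y := by
          rw [intervalIntegral.integral_symm, ← intervalIntegral.integral_neg]
          simp only [← intervalIntegral.integral_symm]

theorem integral_integral_eq_add_triangle {g : ℝ → ℝ → E} (hg : Continuous g.uncurry) (a b : ℝ) :
    ∫ x in a..b, ∫ y in a..b, g x y =
      (∫ x in a..b, ∫ y in a..x, g x y) + ∫ x in a..b, ∫ y in a..x, g y x := by
  have hsplit : ∀ x, ∫ y in x..b, g x y = (∫ y in a..b, g x y) - ∫ y in a..x, g x y := fun x =>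
    (intervalIntegral.integral_interval_sub_left
      (Continuous.intervalIntegrable (by fun_prop) _ _)
      (Continuous.intervalIntegrable (by fun_prop) _ _)).symm
  rw [← integral_integral_swap_triangle hg]
  simp only [hsplit]
  rw [intervalIntegral.integral_sub (Continuous.intervalIntegrable (by fun_prop) _ _)
    (Continuous.intervalIntegrable (by fun_prop) _ _), add_sub_cancel]

theorem integral_integral_of_symm {g : ℝ → ℝ → E} (hg : Continuous g.uncurry)
    (hsymm : ∀ x y, g x y = g y x) (a b : ℝ) :
    ∫ x in a..b, ∫ y in a..b, g x y = (2 : ℝ) • ∫ x in a..b, ∫ y in a..x, g x y := by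
  rw [integral_integral_eq_add_triangle hg, two_smul]
  simp only [hsymm]

theorem integral_integral_integral_of_symm {F : ℝ → ℝ → ℝ → E}
    (hF : Continuous fun p : ℝ × ℝ × ℝ => F p.1 p.2.1 p.2.2)
    (hsymm₁₂ : ∀ x y z, F x y z = F y x z) (hsymm₂₃ : ∀ x y z, F x y z = F x z y) (a b : ℝ) :
    ∫ x in a..b, ∫ y in a..b, ∫ z in a..b, F x y z =
      (6 : ℝ) • ∫ x in a..b, ∫ y in a..x, ∫ z in a..y, F x y z := by
  have hpair : ∀ x c, ∫ y in a..c, ∫ z in a..c, F x y z =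
      (2 : ℝ) • ∫ y in a..c, ∫ z in a..y, F x y z := fun x c =>
    integral_integral_of_symm (g := F x) (by fun_prop) (hsymm₂₃ x) a c
  have hswap : ∀ x, ∫ y in a..x, ∫ z in a..x, F y x z = ∫ y in a..x, ∫ z in a..x, F x y z :=
    fun x => by simp only [hsymm₁₂ _ x]
  simp only [hpair, intervalIntegral.integral_smul]
  rw [integral_integral_eq_add_triangle (by fun_prop)]
  simp only [hswap, hpair, intervalIntegral.integral_smul]
  module

theorem integral_integral_integral_comp_perimeter [CompleteSpace E] {φ : ℝ → E}
    (hφ : Continuous φ) {a b : ℝ} (hab : a ≤ b) :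
    ∫ x in a..b, ∫ y in a..b, ∫ z in a..b, φ (|x - y| + |y - z| + |z - x|) =
      (6 : ℝ) • ∫ x in (0 : ℝ)..(b - a), ∫ w in (0 : ℝ)..x, w • φ (2 * w) := by
  have hordered : ∀ x ∈ Set.uIcc a b,
      ∫ y in a..x, ∫ z in a..y, φ (|x - y| + |y - z| + |z - x|) =
        ∫ w in (0 : ℝ)..(x - a), w • φ (2 * w) := by
    intro x hx
    rw [Set.uIcc_of_le hab] at hx
    calc ∫ y in a..x, ∫ z in a..y, φ (|x - y| + |y - z| + |z - x|)
        = ∫ y in a..x, ∫ z in a..y, φ (2 * (x - z)) := by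
          refine intervalIntegral.integral_congr fun y hy => ?_
          refine intervalIntegral.integral_congr fun z hz => ?_
          rw [Set.uIcc_of_le hx.1] at hy
          rw [Set.uIcc_of_le hy.1] at hz
          rw [abs_of_nonneg (sub_nonneg.2 hy.2), abs_of_nonneg (sub_nonneg.2 hz.2),
            abs_of_nonpos (sub_nonpos.2 (hz.2.trans hy.2))]
          ring_nf
      _ = ∫ z in a..x, ∫ y in z..x, φ (2 * (x - z)) :=
          (integral_integral_swap_triangle (by fun_prop) a x).symm
      _ = ∫ z in a..x, (x - z) • φ (2 * (x - z)) := by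
          simp only [intervalIntegral.integral_const]
      _ = ∫ w in (0 : ℝ)..(x - a), w • φ (2 * w) := by
          rw [intervalIntegral.integral_comp_sub_left (fun w => w • φ (2 * w)), sub_self]
  rw [integral_integral_integral_of_symm (by fun_prop)
      (fun x y z => by rw [abs_sub_comm x y, abs_sub_comm y z, abs_sub_comm z x]; ring_nf)
      (fun x y z => by rw [abs_sub_comm x y, abs_sub_comm y z, abs_sub_comm z x]; ring_nf),
    intervalIntegral.integral_congr hordered,
    intervalIntegral.integral_comp_sub_right (fun x => ∫ w in (0 : ℝ)..x, w • φ (2 * w)), sub_self]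

end OrderedIntegrals

theorem hasDerivAt_exp_neg_mul (κ x : ℝ) :
    HasDerivAt (fun x => exp (-(κ * x))) (-(κ * exp (-(κ * x)))) x :=
  (hasDerivAt_const_mul κ).fun_neg.exp.congr_deriv (by ring)

theorem integral_mul_exp_neg_mul {κ : ℝ} (hκ : κ ≠ 0) (x : ℝ) :
    ∫ w in (0 : ℝ)..x, w * exp (-(κ * w)) = (1 - (1 + κ * x) * exp (-(κ * x))) / κ ^ 2 := by
  have hderiv : ∀ w, HasDerivAt (fun w => -((1 + κ * w) * exp (-(κ * w)) / κ ^ 2))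
      (w * exp (-(κ * w))) w := by
    intro w
    have hlin : HasDerivAt (fun w => κ * w) κ w := hasDerivAt_const_mul κ
    refine HasDerivAt.congr_deriv
      (((hlin.const_add 1).mul (hasDerivAt_exp_neg_mul κ w)).div_const (κ ^ 2)).neg ?_
    field_simp
    ring
  rw [intervalIntegral.integral_eq_sub_of_hasDerivAt (fun w _ => hderiv w)
    (Continuous.intervalIntegrable (by fun_prop) _ _)]
  simp only [mul_zero, neg_zero, exp_zero]
  ring

theorem integral_integral_mul_exp_neg_mul {κ : ℝ} (hκ : κ ≠ 0) (L : ℝ) :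
    ∫ x in (0 : ℝ)..L, ∫ w in (0 : ℝ)..x, w * exp (-(κ * w)) =
      (κ * L - 2 + (κ * L + 2) * exp (-(κ * L))) / κ ^ 3 := by
  have hderiv : ∀ x, HasDerivAt (fun x => (κ * x + (κ * x + 2) * exp (-(κ * x))) / κ ^ 3)
      ((1 - (1 + κ * x) * exp (-(κ * x))) / κ ^ 2) x := by
    intro x
    have hlin : HasDerivAt (fun x => κ * x) κ x := hasDerivAt_const_mul κ
    refine HasDerivAt.congr_deriv
      ((hlin.add ((hlin.add_const 2).mul (hasDerivAt_exp_neg_mul κ x))).div_const (κ ^ 3)) ?_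
    field_simp
    ring
  simp only [integral_mul_exp_neg_mul hκ]
  rw [intervalIntegral.integral_eq_sub_of_hasDerivAt (fun x _ => hderiv x)
    (Continuous.intervalIntegrable (by fun_prop) _ _)]
  simp only [mul_zero, neg_zero, exp_zero]
  ring

theorem tendsto_integral_integral_mul_exp_neg_mul_div {κ : ℝ} (hκ : 0 < κ) :
    Tendsto (fun L => (∫ x in (0 : ℝ)..L, ∫ w in (0 : ℝ)..x, w * exp (-(κ * w))) / L)
      atTop (𝓝 (1 / κ ^ 2)) := by
  have hinv : Tendsto (fun L : ℝ => L⁻¹) atTop (𝓝 0) := tendsto_inv_atTop_zero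
  have hexp : Tendsto (fun L => exp (-(κ * L))) atTop (𝓝 0) :=
    tendsto_exp_neg_atTop_nhds_zero.comp (tendsto_id.const_mul_atTop hκ)
  have hlim : Tendsto
      (fun L => (κ - 2 * L⁻¹ + (κ + 2 * L⁻¹) * exp (-(κ * L))) / κ ^ 3) atTop
      (𝓝 ((κ - 2 * 0 + (κ + 2 * 0) * 0) / κ ^ 3)) :=
    (((hinv.const_mul 2).const_sub κ).add
      (((hinv.const_mul 2).const_add κ).mul hexp)).div_const (κ ^ 3)
  have hvalue : (κ - 2 * 0 + (κ + 2 * 0) * 0) / κ ^ 3 = 1 / κ ^ 2 := by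
    field_simp
    ring
  rw [hvalue] at hlim
  refine hlim.congr' ?_
  filter_upwards [eventually_gt_atTop 0] with L hL
  rw [integral_integral_mul_exp_neg_mul hκ.ne']
  field_simp

section LogTime

/-- The clock `s = -log (T - u)`, in which `f_t` becomes a multiple of the stationary kernel
`exp (-(2α-1)|s-s'|/2)` on an interval. -/
noncomputable def logTime (T u : ℝ) : ℝ := -Real.log (T - u)

variable {T : ℝ}

theorem exp_neg_logTime {u : ℝ} (hu : u < T) : exp (-logTime T u) = T - u := by
  rw [logTime, neg_neg, exp_log (sub_pos.2 hu)]

theorem hasDerivAt_logTime {u : ℝ} (hu : u < T) :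
    HasDerivAt (logTime T) (exp (logTime T u)) u := by
  refine (((hasDerivAt_id u).const_sub T).log (sub_pos.2 hu).ne').neg.congr_deriv ?_
  rw [← neg_neg (logTime T u), exp_neg, exp_neg_logTime hu, id, neg_div, neg_neg, one_div]

theorem logTime_le_logTime {u v : ℝ} (huv : u ≤ v) (hv : v < T) : logTime T u ≤ logTime T v :=
  neg_le_neg (log_le_log (sub_pos.2 hv) (sub_le_sub_left huv T))

theorem integral_comp_logTime (G : ℝ → ℝ) {a b : ℝ} (ha : a < T) (hb : b < T) :
    ∫ u in a..b, G (logTime T u) * exp (logTime T u) = ∫ s in logTime T a..logTime T b, G s := by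
  refine intervalIntegral.integral_comp_mul_deriv_of_deriv_nonneg (fun u hu => ?_)
    (fun u hu => hasDerivAt_logTime (hu.2.trans (max_lt ha hb))) fun _ _ => (exp_pos _).le
  exact (hasDerivAt_logTime (hu.2.trans_lt (max_lt ha hb))).continuousAt.continuousWithinAt

theorem integral_integral_integral_comp_logTime (G : ℝ → ℝ → ℝ → ℝ) {a b : ℝ} (ha : a < T)
    (hb : b < T) :
    ∫ u in a..b, ∫ v in a..b, ∫ w in a..b, G (logTime T u) (logTime T v) (logTime T w) *
        (exp (logTime T u) * exp (logTime T v) * exp (logTime T w)) =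
      ∫ x in logTime T a..logTime T b, ∫ y in logTime T a..logTime T b,
        ∫ z in logTime T a..logTime T b, G x y z := by
  have hz : ∀ u v, ∫ w in a..b, G (logTime T u) (logTime T v) (logTime T w) *
      (exp (logTime T u) * exp (logTime T v) * exp (logTime T w)) =
        (∫ z in logTime T a..logTime T b, G (logTime T u) (logTime T v) z) *
          (exp (logTime T u) * exp (logTime T v)) := fun u v => by
    rw [← integral_comp_logTime _ ha hb, ← intervalIntegral.integral_mul_const]
    simp only [mul_assoc, mul_comm, mul_left_comm]
  have hyz : ∀ u, ∫ v in a..b, (∫ z in logTime T a..logTime T b, G (logTime T u) (logTime T v) z) *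
      (exp (logTime T u) * exp (logTime T v)) =
        (∫ y in logTime T a..logTime T b, ∫ z in logTime T a..logTime T b,
          G (logTime T u) y z) * exp (logTime T u) := fun u => by
    rw [← integral_comp_logTime _ ha hb, ← intervalIntegral.integral_mul_const]
    simp only [mul_assoc, mul_comm]
  simp only [hz, hyz]
  exact integral_comp_logTime
    (fun x => ∫ y in logTime T a..logTime T b, ∫ z in logTime T a..logTime T b, G x y z) ha hb

theorem tendsto_logTime_nhdsLT (T : ℝ) : Tendsto (logTime T) (𝓝[<] T) atTop := by
  have hsub : Tendsto (fun u => T - u) (𝓝[<] T) (𝓝[>] 0) := by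
    refine tendsto_nhdsWithin_iff.2
      ⟨?_, eventually_mem_nhdsWithin.mono fun u => sub_pos.2 ∘ Set.mem_Iio.1⟩
    simpa only [sub_self] using ((continuous_sub_left T).tendsto T).mono_left nhdsWithin_le_nhds
  exact tendsto_neg_atBot_atTop.comp (tendsto_log_nhdsGT_zero.comp hsub)

end LogTime

theorem setIntegral_Icc_eq_intervalIntegral {g : ℝ → ℝ} {a b c : ℝ} (hab : a ≤ b) (hbc : b ≤ c)
    (hg : ∀ x ∉ Set.Icc a b, g x = 0) : ∫ x in Set.Icc a c, g x = ∫ x in a..b, g x := by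
  rw [intervalIntegral.integral_of_le hab, ← integral_Icc_eq_integral_Ioc,
    setIntegral_eq_of_subset_of_forall_sdiff_eq_zero measurableSet_Icc
      (Set.Icc_subset_Icc_right hbc) fun x hx => hg x hx.2]

theorem ip_contr_eq_integral {T t : ℝ} {p q r : ℝ → ℝ → ℝ} (ht : 0 ≤ t) (htT : t ≤ T)
    (hp : ∀ u, ∀ w ∉ Set.Icc 0 t, p u w = 0)
    (hr : ∀ u v, ¬(u ∈ Set.Icc 0 t ∧ v ∈ Set.Icc 0 t) → r u v = 0) :
    ip T (contr T p q) r =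
      ∫ u in (0 : ℝ)..t, ∫ v in (0 : ℝ)..t, ∫ w in (0 : ℝ)..t, p u w * q v w * r u v := by
  have hcontr : ∀ u v, contr T p q u v = ∫ w in (0 : ℝ)..t, p u w * q v w := fun u v =>
    setIntegral_Icc_eq_intervalIntegral ht htT fun w hw => by rw [hp u w hw, zero_mul]
  have hinner : ∀ u, ∫ v in Set.Icc 0 T, contr T p q u v * r u v =
      ∫ v in (0 : ℝ)..t, contr T p q u v * r u v := fun u =>
    setIntegral_Icc_eq_intervalIntegral ht htT fun v hv => by
      rw [hr u v fun h => hv h.2, mul_zero]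
  simp only [ip, hinner]
  rw [setIntegral_Icc_eq_intervalIntegral ht htT]
  · simp only [hcontr, intervalIntegral.integral_mul_const]
  · intro u hu
    simp only [hr u _ fun h => hu h.1, mul_zero, intervalIntegral.integral_zero]

section Kernel

variable {T α t : ℝ}

theorem fker_eq_zero {u v : ℝ} (huv : ¬(u ∈ Set.Icc 0 t ∧ v ∈ Set.Icc 0 t)) :
    fker T α t u v = 0 :=
  if_neg huv

theorem fker_eq_exp_logTime {u v : ℝ} (hu : u ∈ Set.Icc 0 t) (hv : v ∈ Set.Icc 0 t) (ht : t < T) :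
    fker T α t u v = 1 / (2 * √(lam T α t)) *
      exp ((logTime T u + logTime T v) / 2 -
        (2 * α - 1) / 2 * |logTime T u - logTime T v|) := by
  have huT : u < T := hu.2.trans_lt ht
  have hvT : v < T := hv.2.trans_lt ht
  rw [fker, if_pos ⟨hu, hv⟩, mul_assoc]
  congr 1
  obtain huv | hvu := le_total u v
  · rw [max_eq_right huv, min_eq_left huv, ← exp_neg_logTime huT, ← exp_neg_logTime hvT,
      ← exp_mul, ← exp_mul, ← exp_add, abs_of_nonpos (sub_nonpos.2 (logTime_le_logTime huv hvT))]
    ring_nf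
  · rw [max_eq_left hvu, min_eq_right hvu, ← exp_neg_logTime huT, ← exp_neg_logTime hvT,
      ← exp_mul, ← exp_mul, ← exp_add, abs_of_nonneg (sub_nonneg.2 (logTime_le_logTime hvu huT))]
    ring_nf

theorem fker_mul_fker_mul_fker {u v w : ℝ} (hu : u ∈ Set.Icc 0 t) (hv : v ∈ Set.Icc 0 t)
    (hw : w ∈ Set.Icc 0 t) (ht : t < T) :
    fker T α t u w * fker T α t v w * fker T α t u v = (1 / (2 * √(lam T α t))) ^ 3 *
      (exp (-((2 * α - 1) / 2 * (|logTime T u - logTime T v| + |logTime T v - logTime T w| +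
          |logTime T w - logTime T u|))) *
        (exp (logTime T u) * exp (logTime T v) * exp (logTime T w))) := by
  rw [fker_eq_exp_logTime hu hw ht, fker_eq_exp_logTime hv hw ht, fker_eq_exp_logTime hu hv ht,
    abs_sub_comm (logTime T w), mul_mul_mul_comm _ (exp _), ← exp_add,
    mul_mul_mul_comm _ (exp _), ← exp_add]
  simp only [← exp_add]
  ring_nf

theorem ip_contr_fker_eq_integral_integral (ht : 0 ≤ t) (htT : t < T) :
    ip T (contr T (fker T α t) (fker T α t)) (fker T α t) =
      (1 / (2 * √(lam T α t))) ^ 3 * (6 * ∫ x in (0 : ℝ)..(logTime T t - logTime T 0),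
        ∫ w in (0 : ℝ)..x, w * exp (-((2 * α - 1) * w))) := by
  calc ip T (contr T (fker T α t) (fker T α t)) (fker T α t)
      = ∫ u in (0 : ℝ)..t, ∫ v in (0 : ℝ)..t, ∫ w in (0 : ℝ)..t,
          fker T α t u w * fker T α t v w * fker T α t u v :=
        ip_contr_eq_integral ht htT.le (fun u w hw => fker_eq_zero fun h => hw h.2)
          fun u v => fker_eq_zero
    _ = (1 / (2 * √(lam T α t))) ^ 3 * ∫ u in (0 : ℝ)..t, ∫ v in (0 : ℝ)..t, ∫ w in (0 : ℝ)..t,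
          exp (-((2 * α - 1) / 2 * (|logTime T u - logTime T v| + |logTime T v - logTime T w| +
            |logTime T w - logTime T u|))) *
          (exp (logTime T u) * exp (logTime T v) * exp (logTime T w)) := by
        simp only [← intervalIntegral.integral_const_mul]
        refine intervalIntegral.integral_congr fun u hu => ?_
        refine intervalIntegral.integral_congr fun v hv => ?_
        refine intervalIntegral.integral_congr fun w hw => ?_
        rw [Set.uIcc_of_le ht] at hu hv hw
        exact fker_mul_fker_mul_fker hu hv hw htT
    _ = (1 / (2 * √(lam T α t))) ^ 3 * ∫ x in logTime T 0..logTime T t,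
          ∫ y in logTime T 0..logTime T t, ∫ z in logTime T 0..logTime T t,
            exp (-((2 * α - 1) / 2 * (|x - y| + |y - z| + |z - x|))) := by
        rw [← integral_integral_integral_comp_logTime
          (fun x y z => exp (-((2 * α - 1) / 2 * (|x - y| + |y - z| + |z - x|))))
          (ht.trans_lt htT) htT]
    _ = (1 / (2 * √(lam T α t))) ^ 3 * (6 * ∫ x in (0 : ℝ)..(logTime T t - logTime T 0),
          ∫ w in (0 : ℝ)..x, w * exp (-((2 * α - 1) * w))) := by
        rw [integral_integral_integral_comp_perimeter
          (φ := fun r => exp (-((2 * α - 1) / 2 * r))) (by fun_prop)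
          (logTime_le_logTime ht htT), smul_eq_mul]
        simp only [smul_eq_mul, ← mul_assoc, div_mul_cancel₀ _ (two_ne_zero' ℝ)]

end Kernel

theorem eventually_lam_eq (T α : ℝ) : ∀ᶠ t in 𝓝[<] T, lam T α t = logTime T t / (2 * α - 1) := by
  filter_upwards [(tendsto_logTime_nhdsLT T).eventually_ge_atTop 0] with t ht
  rw [lam, ← abs_neg, ← logTime, abs_of_nonneg ht]

theorem tendsto_logTime_sub_div_lam (T α : ℝ) :
    Tendsto (fun t => (logTime T t - logTime T 0) / lam T α t) (𝓝[<] T) (𝓝 (2 * α - 1)) := by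
  have hlim : Tendsto (fun t => (2 * α - 1) * (1 - logTime T 0 * (logTime T t)⁻¹)) (𝓝[<] T)
      (𝓝 ((2 * α - 1) * (1 - logTime T 0 * 0))) :=
    (((tendsto_logTime_nhdsLT T).inv_tendsto_atTop.const_mul _).const_sub _).const_mul _
  rw [mul_zero, sub_zero, mul_one] at hlim
  refine hlim.congr' ?_
  filter_upwards [eventually_lam_eq T α, (tendsto_logTime_nhdsLT T).eventually_gt_atTop 0]
    with t hlam ht
  rw [hlam]
  field_simp

theorem sqrt_mul_one_div_two_mul_sqrt_pow {x : ℝ} (hx : 0 < x) :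
    √x * (1 / (2 * √x)) ^ 3 = 1 / (8 * x) := by
  have hsqrt : √x ≠ 0 := (sqrt_pos.2 hx).ne'
  calc √x * (1 / (2 * √x)) ^ 3 = 1 / (8 * √x ^ 2) := by field_simp; norm_num
    _ = 1 / (8 * x) := by rw [sq_sqrt hx.le]

theorem stmt_5 (T α : ℝ) (hT : 0 < T) (hα : 1 / 2 < α) :
    Tendsto (fun t => Real.sqrt (lam T α t) *
        ip T (contr T (fker T α t) (fker T α t)) (fker T α t))
      (𝓝[<] T) (𝓝 (3 / (4 * (2 * α - 1)))) := by
  have hβ : 0 < 2 * α - 1 := by linarith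
  have hclock := tendsto_logTime_nhdsLT T
  have hlength : Tendsto (fun t => logTime T t - logTime T 0) (𝓝[<] T) atTop :=
    tendsto_atTop_add_const_right _ _ hclock
  have hmean := (tendsto_integral_integral_mul_exp_neg_mul_div hβ).comp hlength
  have hlim := (hmean.mul (tendsto_logTime_sub_div_lam T α)).const_mul (6 / 8)
  have hvalue : 6 / 8 * (1 / (2 * α - 1) ^ 2 * (2 * α - 1)) = 3 / (4 * (2 * α - 1)) := by
    field_simp
    norm_num
  rw [hvalue] at hlim
  refine hlim.congr' ?_
  filter_upwards [eventually_lam_eq T α, hclock.eventually_gt_atTop 0,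
    hlength.eventually_ne_atTop 0, Ioo_mem_nhdsLT hT] with t hlam hpos hlen ht
  have hlam_pos : 0 < lam T α t := hlam ▸ div_pos hpos hβ
  rw [ip_contr_fker_eq_integral_integral ht.1.le ht.2, ← mul_assoc √_,
    sqrt_mul_one_div_two_mul_sqrt_pow hlam_pos, Function.comp_apply, div_mul_div_cancel₀ hlen]
  ring
end

section
/- There exists a constant C > 0, depending only on α and T, such that for every t with max(0, T − 1/e) < t < T one has |⟨f_t, g_t⟩| ≤ C/√λ_t. -/
open MeasureTheory Real Filter Topology

/-!
With `x = T - max u v`, `y = T - min u v` and `β = 2α - 1`, the product of the two kernels is at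
most a constant times `x ^ (β - 1) * y ^ (-β - 1)`. As a function of `(T - u, T - v)` this majorant
is homogeneous of degree `-2`, so its integral over the half-line in one variable is a constant,
`2 / β`, times the inverse of the other. Integrating `(T - u)⁻¹` over `[0, t]` costs only
`log (T / (T - t))`, which the factor `1 / |log (T - t)|` in `g_t` absorbs.
-/

/-- The symmetric kernel `min(x,y)^(β-1) max(x,y)^(-β-1)` on `(0,∞)²`, homogeneous of degree `-2`.
It dominates the product `f_t g_t` when `β = 2α - 1`, `x = T - u`, `y = T - v`. -/
noncomputable def minMaxKernel (β x y : ℝ) : ℝ := min x y ^ (β - 1) * max x y ^ (-β - 1)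

section MinMaxKernel

variable {β x y : ℝ}

lemma minMaxKernel_of_le (h : y ≤ x) : minMaxKernel β x y = y ^ (β - 1) * x ^ (-β - 1) := by
  rw [minMaxKernel, min_eq_right h, max_eq_left h]

lemma minMaxKernel_of_ge (h : x ≤ y) : minMaxKernel β x y = x ^ (β - 1) * y ^ (-β - 1) := by
  rw [minMaxKernel, min_eq_left h, max_eq_right h]

lemma minMaxKernel_nonneg (hx : 0 ≤ x) (hy : 0 ≤ y) : 0 ≤ minMaxKernel β x y :=
  mul_nonneg (rpow_nonneg (le_min hx hy) _) (rpow_nonneg (le_max_of_le_left hx) _)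

lemma minMaxKernel_sub_left (T u v : ℝ) :
    minMaxKernel β (T - u) (T - v) = (T - max u v) ^ (β - 1) * (T - min u v) ^ (-β - 1) := by
  rw [minMaxKernel, min_sub_sub_left, max_sub_sub_left]

lemma integrableOn_minMaxKernel_Ioc (hβ : 0 < β) (hx : 0 ≤ x) :
    IntegrableOn (minMaxKernel β x) (Set.Ioc 0 x) := by
  have hpow : IntegrableOn (fun y : ℝ => y ^ (β - 1)) (Set.Ioc 0 x) :=
    (intervalIntegrable_iff_integrableOn_Ioc_of_le hx).1
      (intervalIntegral.intervalIntegrable_rpow' (by linarith))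
  exact IntegrableOn.congr_fun (hpow.mul_const (x ^ (-β - 1)))
    (fun _ hy => (minMaxKernel_of_le hy.2).symm) measurableSet_Ioc

lemma integrableOn_minMaxKernel_Ioi_self (hβ : 0 < β) (hx : 0 < x) :
    IntegrableOn (minMaxKernel β x) (Set.Ioi x) := by
  have hpow : IntegrableOn (fun y : ℝ => y ^ (-β - 1)) (Set.Ioi x) :=
    integrableOn_Ioi_rpow_of_lt (by linarith) hx
  exact IntegrableOn.congr_fun (hpow.const_mul (x ^ (β - 1)))
    (fun _ hy => (minMaxKernel_of_ge (le_of_lt hy)).symm) measurableSet_Ioi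

lemma integrableOn_minMaxKernel_Ioi_zero (hβ : 0 < β) (hx : 0 < x) :
    IntegrableOn (minMaxKernel β x) (Set.Ioi 0) := by
  rw [← Set.Ioc_union_Ioi_eq_Ioi hx.le]
  exact (integrableOn_minMaxKernel_Ioc hβ hx.le).union (integrableOn_minMaxKernel_Ioi_self hβ hx)

lemma setIntegral_minMaxKernel_Ioc (hβ : 0 < β) (hx : 0 < x) :
    ∫ y in Set.Ioc 0 x, minMaxKernel β x y = β⁻¹ * x⁻¹ := by
  calc ∫ y in Set.Ioc 0 x, minMaxKernel β x y
      = ∫ y in Set.Ioc 0 x, y ^ (β - 1) * x ^ (-β - 1) :=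
        setIntegral_congr_fun measurableSet_Ioc fun _ hy => minMaxKernel_of_le hy.2
    _ = x ^ β / β * x ^ (-β - 1) := by
        rw [integral_mul_const, ← intervalIntegral.integral_of_le hx.le,
          integral_rpow (Or.inl (by linarith)), sub_add_cancel, zero_rpow hβ.ne', sub_zero]
    _ = β⁻¹ * x ^ (β + (-β - 1)) := by rw [rpow_add hx]; ring
    _ = β⁻¹ * x⁻¹ := by rw [← rpow_neg_one x]; ring_nf

lemma setIntegral_minMaxKernel_Ioi_self (hβ : 0 < β) (hx : 0 < x) :
    ∫ y in Set.Ioi x, minMaxKernel β x y = β⁻¹ * x⁻¹ := by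
  calc ∫ y in Set.Ioi x, minMaxKernel β x y
      = ∫ y in Set.Ioi x, x ^ (β - 1) * y ^ (-β - 1) :=
        setIntegral_congr_fun measurableSet_Ioi fun _ hy => minMaxKernel_of_ge (le_of_lt hy)
    _ = x ^ (β - 1) * (x ^ (-β) / β) := by
        rw [integral_const_mul, integral_Ioi_rpow_of_lt (by linarith) hx, sub_add_cancel,
          neg_div_neg_eq]
    _ = β⁻¹ * x ^ (β - 1 + -β) := by rw [rpow_add hx]; ring
    _ = β⁻¹ * x⁻¹ := by rw [← rpow_neg_one x]; ring_nf

lemma setIntegral_minMaxKernel_Ioi_zero (hβ : 0 < β) (hx : 0 < x) :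
    ∫ y in Set.Ioi 0, minMaxKernel β x y = 2 / β * x⁻¹ := by
  rw [← Set.Ioc_union_Ioi_eq_Ioi hx.le,
    setIntegral_union (Set.Ioc_disjoint_Ioi le_rfl) measurableSet_Ioi
      (integrableOn_minMaxKernel_Ioc hβ hx.le) (integrableOn_minMaxKernel_Ioi_self hβ hx),
    setIntegral_minMaxKernel_Ioc hβ hx, setIntegral_minMaxKernel_Ioi_self hβ hx]
  ring

lemma intervalIntegrable_minMaxKernel {a b : ℝ} (hβ : 0 < β) (hx : 0 < x) (ha : 0 ≤ a)
    (hab : a ≤ b) : IntervalIntegrable (minMaxKernel β x) volume a b :=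
  (intervalIntegrable_iff_integrableOn_Ioc_of_le hab).2 <|
    (integrableOn_minMaxKernel_Ioi_zero hβ hx).mono_set fun _ hy => ha.trans_lt hy.1

lemma intervalIntegral_minMaxKernel_le {a b : ℝ} (hβ : 0 < β) (hx : 0 < x) (ha : 0 ≤ a)
    (hab : a ≤ b) : ∫ y in a..b, minMaxKernel β x y ≤ 2 / β * x⁻¹ := by
  rw [intervalIntegral.integral_of_le hab, ← setIntegral_minMaxKernel_Ioi_zero hβ hx]
  refine setIntegral_mono_set (integrableOn_minMaxKernel_Ioi_zero hβ hx) ?_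
    (LE.le.eventuallyLE fun _ hy => ha.trans_lt hy.1)
  filter_upwards [ae_restrict_mem measurableSet_Ioi] with y hy
  exact minMaxKernel_nonneg hx.le (le_of_lt hy)

end MinMaxKernel

section Domination

variable {β c a b T : ℝ}

lemma abs_integral_le_of_abs_le_minMaxKernel {x : ℝ} {φ : ℝ → ℝ} (hβ : 0 < β) (hc : 0 ≤ c)
    (hx : 0 < x) (hab : a ≤ b) (hbT : b ≤ T)
    (hφ : ∀ v ∈ Set.Icc a b, |φ v| ≤ c * minMaxKernel β x (T - v)) :
    |∫ v in a..b, φ v| ≤ c * (2 / β) * x⁻¹ := by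
  have hint : IntervalIntegrable (fun v => minMaxKernel β x (T - v)) volume a b := by
    simpa only [sub_sub_cancel] using
      ((intervalIntegrable_minMaxKernel (b := T - a) hβ hx (sub_nonneg.2 hbT)
        (by linarith)).comp_sub_left T).symm
  calc |∫ v in a..b, φ v|
      ≤ ∫ v in a..b, c * minMaxKernel β x (T - v) :=
        intervalIntegral.norm_integral_le_of_norm_le (f := φ) hab
          (ae_of_all _ fun v hv => hφ v (Set.Ioc_subset_Icc_self hv)) (hint.const_mul c)
    _ = c * ∫ y in (T - b)..(T - a), minMaxKernel β x y := by
        rw [intervalIntegral.integral_const_mul, intervalIntegral.integral_comp_sub_left]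
    _ ≤ c * (2 / β * x⁻¹) := by
        gcongr
        exact intervalIntegral_minMaxKernel_le hβ hx (by linarith) (by linarith)
    _ = c * (2 / β) * x⁻¹ := (mul_assoc ..).symm

lemma integral_inv_sub_left (hab : a ≤ b) (hbT : b < T) :
    ∫ u in a..b, (T - u)⁻¹ = log ((T - a) / (T - b)) := by
  rw [intervalIntegral.integral_comp_sub_left fun x : ℝ => x⁻¹,
    integral_inv_of_pos (by linarith) (by linarith)]

lemma abs_integral_integral_le_of_abs_le_minMaxKernel {F : ℝ → ℝ → ℝ} (hβ : 0 < β) (hc : 0 ≤ c)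
    (hab : a ≤ b) (hbT : b < T)
    (hF : ∀ u ∈ Set.Icc a b, ∀ v ∈ Set.Icc a b,
      |F u v| ≤ c * minMaxKernel β (T - u) (T - v)) :
    |∫ u in a..b, ∫ v in a..b, F u v| ≤ c * (2 / β) * log ((T - a) / (T - b)) := by
  have hrow : ∀ u ∈ Set.Ioc a b, |∫ v in a..b, F u v| ≤ c * (2 / β) * (T - u)⁻¹ := fun u hu =>
    abs_integral_le_of_abs_le_minMaxKernel hβ hc (by linarith [hu.2]) hab hbT.le
      (hF u (Set.Ioc_subset_Icc_self hu))
  have hint : IntervalIntegrable (fun u => (T - u)⁻¹) volume a b := by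
    refine intervalIntegral.intervalIntegrable_inv (fun u hu => ?_) (by fun_prop)
    rw [Set.uIcc_of_le hab] at hu
    linarith [hu.2]
  calc |∫ u in a..b, ∫ v in a..b, F u v|
      ≤ ∫ u in a..b, c * (2 / β) * (T - u)⁻¹ :=
        intervalIntegral.norm_integral_le_of_norm_le (f := fun u => ∫ v in a..b, F u v) hab
          (ae_of_all _ hrow) (hint.const_mul _)
    _ = c * (2 / β) * log ((T - a) / (T - b)) := by
        rw [intervalIntegral.integral_const_mul, integral_inv_sub_left hab hbT]

end Domination

section Kernels

variable {T α t u v : ℝ}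

lemma ip_eq_intervalIntegral {p q : ℝ → ℝ → ℝ} (ht0 : 0 ≤ t) (htT : t ≤ T)
    (hp : ∀ u v, ¬(u ∈ Set.Icc 0 t ∧ v ∈ Set.Icc 0 t) → p u v = 0) :
    ip T p q = ∫ u in 0..t, ∫ v in 0..t, p u v * q u v := by
  have restrict {φ : ℝ → ℝ} (hφ : ∀ u ∉ Set.Icc 0 t, φ u = 0) :
      ∫ u in Set.Icc 0 T, φ u = ∫ u in 0..t, φ u := by
    rw [intervalIntegral.integral_of_le ht0, ← integral_Icc_eq_integral_Ioc]
    exact setIntegral_eq_of_subset_of_forall_sdiff_eq_zero measurableSet_Icc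
      (Set.Icc_subset_Icc_right htT) fun u hu => hφ u hu.2
  have hinner (u : ℝ) : ∫ v in Set.Icc 0 T, p u v * q u v = ∫ v in 0..t, p u v * q u v :=
    restrict fun v hv => by rw [hp u v fun h => hv h.2, zero_mul]
  simp only [ip, hinner]
  refine restrict fun u hu => ?_
  simp only [hp u _ fun h => hu h.1, zero_mul, intervalIntegral.integral_zero]

lemma fker_mul_gker_of_mem (htT : t < T) (hu : u ∈ Set.Icc 0 t) (hv : v ∈ Set.Icc 0 t) :
    fker T α t u v * gker T α t u v = 1 / (2 * √(lam T α t) * |log (T - t)|) *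
      ((T - max u v)⁻¹ * ((T - max u v) ^ (2 * α - 1) - (T - t) ^ (2 * α - 1)) *
        (T - min u v) ^ (-(2 * α))) := by
  have hx : 0 < T - max u v := sub_pos.2 ((max_le hu.2 hv.2).trans_lt htT)
  have hy : 0 < T - min u v := sub_pos.2 ((min_le_of_left_le hu.2).trans_lt htT)
  have hxpow : (T - max u v)⁻¹ = (T - max u v) ^ (α - 1) * (T - max u v) ^ (-α) := by
    rw [← rpow_add hx, ← rpow_neg_one]
    ring_nf
  have hypow : (T - min u v) ^ (-(2 * α)) = (T - min u v) ^ (-α) * (T - min u v) ^ (-α) := by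
    rw [← rpow_add hy]
    ring_nf
  have hsymm : (T - u) ^ (-α) * (T - v) ^ (-α) =
      (T - max u v) ^ (-α) * (T - min u v) ^ (-α) := by
    rcases le_total u v with h | h
    · rw [max_eq_right h, min_eq_left h, mul_comm]
    · rw [max_eq_left h, min_eq_right h]
  rw [fker, gker, if_pos ⟨hu, hv⟩, if_pos ⟨hu, hv⟩, hsymm, hxpow, hypow]
  ring

lemma abs_fker_mul_gker_le (hα : 1 / 2 < α) (htT : t < T) (hu : u ∈ Set.Icc 0 t)
    (hv : v ∈ Set.Icc 0 t) :
    |fker T α t u v * gker T α t u v| ≤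
      1 / (2 * √(lam T α t) * |log (T - t)|) * minMaxKernel (2 * α - 1) (T - u) (T - v) := by
  have hδ : 0 < T - t := sub_pos.2 htT
  have hδx : T - t ≤ T - max u v := sub_le_sub_left (max_le hu.2 hv.2) T
  have hx : 0 < T - max u v := hδ.trans_le hδx
  have hy : 0 ≤ T - min u v := hx.le.trans (sub_le_sub_left min_le_max T)
  have hdiff : 0 ≤ (T - max u v) ^ (2 * α - 1) - (T - t) ^ (2 * α - 1) :=
    sub_nonneg.2 (rpow_le_rpow hδ.le hδx (by linarith))
  have hfactor : (T - max u v)⁻¹ * ((T - max u v) ^ (2 * α - 1) - (T - t) ^ (2 * α - 1)) ≤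
      (T - max u v) ^ (2 * α - 1 - 1) := by
    rw [rpow_sub_one hx.ne' (2 * α - 1), div_eq_inv_mul]
    gcongr
    exact sub_le_self _ (by positivity)
  rw [fker_mul_gker_of_mem htT hu hv, abs_of_nonneg (by positivity), minMaxKernel_sub_left,
    show -(2 * α - 1) - 1 = -(2 * α) by ring]
  gcongr

lemma abs_ip_fker_gker_le (hα : 1 / 2 < α) (ht0 : 0 ≤ t) (htT : t < T) :
    |ip T (fker T α t) (gker T α t)| ≤
      log (T / (T - t)) / |log (T - t)| / (2 * α - 1) / √(lam T α t) := by
  rw [ip_eq_intervalIntegral (p := fker T α t) ht0 htT.le fun u v h => if_neg h]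
  calc _ ≤ 1 / (2 * √(lam T α t) * |log (T - t)|) * (2 / (2 * α - 1)) *
        log ((T - 0) / (T - t)) :=
        abs_integral_integral_le_of_abs_le_minMaxKernel (by linarith) (by positivity) ht0 htT
          fun u hu v hv => abs_fker_mul_gker_le hα htT hu hv
    _ = _ := by rw [sub_zero]; ring

end Kernels

lemma log_div_div_abs_log_le {T δ : ℝ} (hT : T ≠ 0) (hδ : 0 < δ) (hδe : δ < 1 / exp 1) :
    log (T / δ) / |log δ| ≤ 1 + |log T| := by
  have hlog : log δ < -1 := by rwa [log_lt_iff_lt_exp hδ, exp_neg, ← one_div]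
  rw [abs_of_neg (by linarith), div_le_iff₀ (by linarith), log_div hT hδ.ne']
  nlinarith [le_abs_self (log T), abs_nonneg (log T)]

theorem stmt_12 (T α : ℝ) (hT : 0 < T) (hα : 1 / 2 < α) :
    ∃ C > 0, ∀ t : ℝ, max 0 (T - 1 / Real.exp 1) < t → t < T →
      |ip T (fker T α t) (gker T α t)| ≤ C / Real.sqrt (lam T α t) := by
  have hβ : 0 < 2 * α - 1 := by linarith
  refine ⟨(1 + |log T|) / (2 * α - 1), by positivity, fun t ht htT => ?_⟩
  obtain ⟨ht0, hte⟩ := max_lt_iff.1 ht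
  calc |ip T (fker T α t) (gker T α t)|
      ≤ log (T / (T - t)) / |log (T - t)| / (2 * α - 1) / √(lam T α t) :=
        abs_ip_fker_gker_le hα ht0.le htT
    _ ≤ (1 + |log T|) / (2 * α - 1) / √(lam T α t) := by
        gcongr
        exact log_div_div_abs_log_le hT.ne' (sub_pos.2 htT) (sub_lt_comm.1 hte)
end

section
/- There exists a constant C > 0, depending only on α and T, such that for all t sufficiently near T (with max(0, T − 1/e) < t < T) one has ψ₃(t) := (2/b_t²)·√( ‖g_t‖⁴ + 2‖g_t ⊗₁ g_t‖² ) ≤ C/√|log(T−t)|; in fact ψ₃(t) ≤ C/λ_t^{3/4}. -/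
open MeasureTheory Real Filter Topology

/-!
Hilbert–Schmidt norms are submultiplicative, so `‖g_t ⊗₁ g_t‖ ≤ ‖g_t‖²` and
`ψ₃(t) ≤ 4 ‖g_t‖² / b_t²`. Dropping the term `(T - t) ^ (2α - 1)` in `g_t` bounds `g_t²` by the
symmetrisation of a multiple of the integrand of `b_t`, whence
`‖g_t‖² ≤ 2 b_t / ((2α - 1) |log (T - t)|)`. Since `b_t → 1` as `t ↑ T`, this gives
`ψ₃(t) = O(1 / |log (T - t)|)`, which is stronger than both claimed rates.
-/

section HilbertSchmidt

variable {X Y Z : Type*} [MeasurableSpace X] [MeasurableSpace Y] [MeasurableSpace Z]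
  {μ : Measure X} {ν : Measure Y} {ρ : Measure Z}

theorem sq_integral_mul_le {f g : Z → ℝ} (hf : MemLp f 2 ρ) (hg : MemLp g 2 ρ) :
    (∫ z, f z * g z ∂ρ) ^ 2 ≤ (∫ z, f z ^ 2 ∂ρ) * ∫ z, g z ^ 2 ∂ρ := by
  have inner_toLp {f g : Z → ℝ} (hf : MemLp f 2 ρ) (hg : MemLp g 2 ρ) :
      inner ℝ (hf.toLp f) (hg.toLp g) = ∫ z, f z * g z ∂ρ := by
    rw [L2.inner_def]
    refine integral_congr_ae ?_
    filter_upwards [hf.coeFn_toLp, hg.coeFn_toLp] with z hfz hgz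
    simp only [hfz, hgz, RCLike.inner_apply, conj_trivial, mul_comm]
  simpa only [inner_toLp, ← sq] using real_inner_mul_inner_self_le (hf.toLp f) (hg.toLp g)

theorem ae_memLp_two_of_memLp_prod [SFinite μ] [SFinite ρ] {p : X → Z → ℝ}
    (hp : MemLp (Function.uncurry p) 2 (μ.prod ρ)) : ∀ᵐ x ∂μ, MemLp (p x) 2 ρ := by
  filter_upwards [hp.1.prodMk_left, hp.integrable_sq.prod_right_ae] with x hmeas hsq
  exact (memLp_two_iff_integrable_sq hmeas).2 hsq

/- Cauchy–Schwarz in `z` bounds the composed kernel at `(x, y)` by the product of the `L²` norms of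
the rows `p x` and `q y`, and such a product integrates as a product. -/
theorem integral_integral_sq_integral_mul_le [SFinite μ] [SFinite ν] [SFinite ρ]
    {p : X → Z → ℝ} {q : Y → Z → ℝ}
    (hp : MemLp (Function.uncurry p) 2 (μ.prod ρ))
    (hq : MemLp (Function.uncurry q) 2 (ν.prod ρ)) :
    ∫ x, ∫ y, (∫ z, p x z * q y z ∂ρ) ^ 2 ∂ν ∂μ ≤
      (∫ x, ∫ z, p x z ^ 2 ∂ρ ∂μ) * ∫ y, ∫ z, q y z ^ 2 ∂ρ ∂ν := by
  have hP : Integrable (fun x => ∫ z, p x z ^ 2 ∂ρ) μ := hp.integrable_sq.integral_prod_left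
  have hQ : Integrable (fun y => ∫ z, q y z ^ 2 ∂ρ) ν := hq.integrable_sq.integral_prod_left
  rw [← integral_mul_const]
  refine integral_mono_of_nonneg
    (ae_of_all _ fun _ => integral_nonneg fun _ => sq_nonneg _) (hP.mul_const _) ?_
  filter_upwards [ae_memLp_two_of_memLp_prod hp] with x hpx
  rw [← integral_const_mul]
  refine integral_mono_of_nonneg (ae_of_all _ fun _ => sq_nonneg _) (hQ.const_mul _) ?_
  filter_upwards [ae_memLp_two_of_memLp_prod hq] with y hqy
  exact sq_integral_mul_le hpx hqy

theorem integral_le_two_mul_of_le_add_swap [SFinite μ] {f h : X × X → ℝ}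
    (hf : 0 ≤ f) (hh : Integrable h (μ.prod μ)) (hfh : ∀ z, f z ≤ h z + h z.swap) :
    ∫ z, f z ∂μ.prod μ ≤ 2 * ∫ z, h z ∂μ.prod μ :=
  calc ∫ z, f z ∂μ.prod μ ≤ ∫ z, (h z + h z.swap) ∂μ.prod μ :=
        integral_mono_of_nonneg (ae_of_all _ hf) (hh.add hh.swap) (ae_of_all _ hfh)
    _ = 2 * ∫ z, h z ∂μ.prod μ := by
        simp only [two_mul, integral_add hh (show Integrable (fun z => h z.swap) _ from hh.swap),
          integral_prod_swap]

theorem memLp_two_of_sq_le_add_swap [SFinite μ] {f h : X × X → ℝ}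
    (hf : AEStronglyMeasurable f (μ.prod μ)) (hh : Integrable h (μ.prod μ))
    (hfh : ∀ z, f z ^ 2 ≤ h z + h z.swap) : MemLp f 2 (μ.prod μ) := by
  refine (memLp_two_iff_integrable_sq hf).2 ((hh.add hh.swap).mono' (hf.pow 2) ?_)
  exact ae_of_all _ fun z => (norm_of_nonneg (sq_nonneg (f z))).trans_le (hfh z)

end HilbertSchmidt

/-- Lebesgue measure on the square `[0,T]²`, on which the norms `normSq T` are taken. -/
noncomputable abbrev squareMeasure (T : ℝ) : Measure (ℝ × ℝ) :=
  (volume.restrict (Set.Icc 0 T)).prod (volume.restrict (Set.Icc 0 T))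

section Kernels

variable {T : ℝ} {p q : ℝ → ℝ → ℝ}

theorem normSq_eq (T : ℝ) (p : ℝ → ℝ → ℝ) :
    normSq T p = ∫ u in Set.Icc 0 T, ∫ v in Set.Icc 0 T, p u v ^ 2 := by
  simp only [normSq, ip, sq]

theorem normSq_nonneg (T : ℝ) (p : ℝ → ℝ → ℝ) : 0 ≤ normSq T p :=
  integral_nonneg fun _ => integral_nonneg fun _ => mul_self_nonneg _

theorem normSq_eq_integral_prod
    (hp : MemLp (Function.uncurry p) 2 (squareMeasure T)) :
    normSq T p = ∫ z, Function.uncurry p z ^ 2 ∂squareMeasure T :=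
  (normSq_eq T p).trans (integral_prod _ hp.integrable_sq).symm

theorem normSq_contr_le
    (hp : MemLp (Function.uncurry p) 2 (squareMeasure T))
    (hq : MemLp (Function.uncurry q) 2 (squareMeasure T)) :
    normSq T (contr T p q) ≤ normSq T p * normSq T q := by
  simpa only [normSq_eq, contr] using integral_integral_sq_integral_mul_le hp hq

theorem sqrt_normSq_sq_add_le
    (hp : MemLp (Function.uncurry p) 2 (squareMeasure T)) :
    √(normSq T p ^ 2 + 2 * normSq T (contr T p p)) ≤ 2 * normSq T p := by
  have hp_nonneg := normSq_nonneg T p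
  refine Real.sqrt_le_iff.2 ⟨by positivity, ?_⟩
  nlinarith [normSq_contr_le hp hp]

end Kernels

section Triangle

/-- The triangle `0 ≤ u ≤ s ≤ t` over which `b_t` integrates, as a set of pairs `(s, u)`. -/
def triangle (t : ℝ) : Set (ℝ × ℝ) := {z | 0 ≤ z.2 ∧ z.2 ≤ z.1 ∧ z.1 ≤ t}

theorem triangle_subset (t : ℝ) : triangle t ⊆ Set.Icc 0 t ×ˢ Set.Icc 0 t :=
  fun _ ⟨h0, h1, h2⟩ => ⟨⟨h0.trans h1, h2⟩, h0, h1.trans h2⟩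

theorem isClosed_triangle (t : ℝ) : IsClosed (triangle t) :=
  (isClosed_le continuous_const continuous_snd).inter
    ((isClosed_le continuous_snd continuous_fst).inter
      (isClosed_le continuous_fst continuous_const))

theorem isCompact_triangle (t : ℝ) : IsCompact (triangle t) :=
  (isCompact_Icc.prod isCompact_Icc).of_isClosed_subset (isClosed_triangle t) (triangle_subset t)

theorem indicator_triangle (t : ℝ) (F : ℝ × ℝ → ℝ) (s u : ℝ) :
    (triangle t).indicator F (s, u) =
      (Set.Icc 0 t).indicator (fun s => (Set.Icc 0 s).indicator (fun u => F (s, u)) u) s := by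
  simp only [Set.indicator_apply, triangle, Set.mem_ofPred_eq, Set.mem_Icc]
  grind

theorem setIntegral_triangle {t : ℝ} (ht : 0 ≤ t) {F : ℝ × ℝ → ℝ}
    (hF : IntegrableOn F (triangle t)) :
    ∫ z in triangle t, F z = ∫ s in (0:ℝ)..t, ∫ u in (0:ℝ)..s, F (s, u) := by
  have hmeas := (isClosed_triangle t).measurableSet
  have inner (s : ℝ) : ∫ u, (triangle t).indicator F (s, u) =
      (Set.Icc 0 t).indicator (fun s => ∫ u in (0:ℝ)..s, F (s, u)) s := by
    simp only [indicator_triangle]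
    by_cases hs : s ∈ Set.Icc 0 t
    · simp only [Set.indicator_of_mem hs, integral_indicator measurableSet_Icc,
        intervalIntegral.integral_of_le hs.1, integral_Icc_eq_integral_Ioc]
    · simp only [Set.indicator_of_notMem hs, integral_zero]
  rw [← integral_indicator hmeas, Measure.volume_eq_prod,
    integral_prod _ ((integrable_indicator_iff hmeas).2 hF)]
  simp only [inner]
  rw [integral_indicator measurableSet_Icc, integral_Icc_eq_integral_Ioc,
    intervalIntegral.integral_of_le ht]

end Triangle

section PowerIntegrals

variable {T a b : ℝ}

theorem integral_const_sub_rpow {r : ℝ} (ha : a < T) (hb : b < T) (hr : r ≠ -1) :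
    ∫ x in a..b, (T - x) ^ r = ((T - a) ^ (r + 1) - (T - b) ^ (r + 1)) / (r + 1) := by
  rw [intervalIntegral.integral_comp_sub_left (fun x => x ^ r) T, integral_rpow]
  exact Or.inr ⟨hr, Set.notMem_uIcc_of_lt (by linarith) (by linarith)⟩

theorem integral_inv_const_sub (ha : a < T) (hb : b < T) :
    ∫ x in a..b, (T - x)⁻¹ = log (T - a) - log (T - b) := by
  rw [intervalIntegral.integral_comp_sub_left (fun x => x⁻¹) T,
    integral_inv_of_pos (by linarith) (by linarith), log_div (by linarith) (by linarith)]

theorem intervalIntegrable_const_sub_rpow (ha : a < T) (hb : b < T) (r : ℝ) :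
    IntervalIntegrable (fun x => (T - x) ^ r) volume a b := by
  refine ContinuousOn.intervalIntegrable (ContinuousOn.rpow_const (by fun_prop) fun x hx => ?_)
  have hxT : x < T := hx.2.trans_lt (max_lt ha hb)
  exact Or.inl (sub_pos.2 hxT).ne'

theorem integral_const_sub_rpow_mul_rpow {s : ℝ} (ha : a < T) (hb : b < T) (hs : s ≠ 0) :
    ∫ x in a..b, (T - b) ^ (s - 1) * (T - x) ^ (-s - 1) =
      ((T - b)⁻¹ - (T - a) ^ (-s) * (T - b) ^ (s - 1)) / s := by
  have hinv : (T - b)⁻¹ = (T - b) ^ (s - 1) * (T - b) ^ (-s) := by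
    rw [← rpow_add (sub_pos.2 hb), ← rpow_neg_one]
    ring_nf
  rw [intervalIntegral.integral_const_mul, integral_const_sub_rpow ha hb (by grind), hinv,
    sub_add_cancel, div_neg]
  ring

theorem integral_inv_const_sub_sub_rpow {s : ℝ} (ha : a < T) (hb : b < T) (hs : s ≠ 0) :
    ∫ x in a..b, ((T - x)⁻¹ - (T - a) ^ (-s) * (T - x) ^ (s - 1)) =
      log (T - a) - log (T - b) - (1 - ((T - b) / (T - a)) ^ s) / s := by
  have hTa : 0 < T - a := sub_pos.2 ha
  have hinv : IntervalIntegrable (fun x => (T - x)⁻¹) volume a b := by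
    simpa only [rpow_neg_one] using intervalIntegrable_const_sub_rpow ha hb (-1)
  have hcancel : (T - a) ^ (-s) * (T - a) ^ s = 1 := by
    rw [← rpow_add hTa, neg_add_cancel, rpow_zero]
  have hratio : (T - a) ^ (-s) * (T - b) ^ s = ((T - b) / (T - a)) ^ s := by
    rw [div_rpow (sub_pos.2 hb).le hTa.le, rpow_neg hTa.le, div_eq_inv_mul]
  rw [intervalIntegral.integral_sub hinv
      ((intervalIntegrable_const_sub_rpow ha hb _).const_mul _),
    intervalIntegral.integral_const_mul, integral_inv_const_sub ha hb,
    integral_const_sub_rpow ha hb (by grind), sub_add_cancel, mul_div_assoc', mul_sub, hcancel,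
    hratio]

end PowerIntegrals

/-- The integrand of `b_t` without the factor `1 / λ_t`, as a function of the pair `(s, u)`. -/
noncomputable def bIntegrand (T α : ℝ) (z : ℝ × ℝ) : ℝ :=
  (T - z.1) ^ (2 * α - 2) * (T - z.2) ^ (-(2 * α))

/-- The function supported on the triangle `0 ≤ u ≤ s ≤ t` whose symmetrisation dominates `g_t²`;
it is proportional to the integrand of `b_t`. -/
noncomputable def gMajorant (T α t : ℝ) : ℝ × ℝ → ℝ :=
  (triangle t).indicator fun z => bIntegrand T α z / |log (T - t)| ^ 2

section Majorant

variable {T α t : ℝ}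

theorem continuousOn_bIntegrand (htT : t < T) (α : ℝ) :
    ContinuousOn (bIntegrand T α) (triangle t) := by
  unfold bIntegrand
  refine (ContinuousOn.rpow_const (by fun_prop) fun z hz => Or.inl ?_).mul
    (ContinuousOn.rpow_const (by fun_prop) fun z hz => Or.inl ?_)
  · linarith [hz.2.2]
  · linarith [hz.2.1, hz.2.2]

theorem integrableOn_bIntegrand (htT : t < T) (α : ℝ) :
    IntegrableOn (bIntegrand T α) (triangle t) :=
  (continuousOn_bIntegrand htT α).integrableOn_compact (isCompact_triangle t)

theorem gMajorant_nonneg (htT : t < T) (z : ℝ × ℝ) : 0 ≤ gMajorant T α t z := by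
  refine Set.indicator_nonneg (fun z hz => ?_) z
  have hs : 0 ≤ T - z.1 := by linarith [hz.2.2]
  have hu : 0 ≤ T - z.2 := by linarith [hz.2.1, hz.2.2]
  unfold bIntegrand
  positivity

theorem integrable_gMajorant (htT : t < T) :
    Integrable (gMajorant T α t) (squareMeasure T) := by
  rw [squareMeasure, Measure.prod_restrict]
  exact ((integrable_indicator_iff (isClosed_triangle t).measurableSet).2
    ((integrableOn_bIntegrand htT α).div_const _)).restrict

theorem integral_gMajorant (hα : α ≠ 1 / 2) (ht0 : 0 ≤ t) (htT : t < T) :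
    ∫ z, gMajorant T α t z ∂squareMeasure T = bfun T α t / ((2 * α - 1) * |log (T - t)|) := by
  have hsub : triangle t ⊆ Set.Icc 0 T ×ˢ Set.Icc 0 T :=
    (triangle_subset t).trans (Set.prod_mono (Set.Icc_subset_Icc_right htT.le)
      (Set.Icc_subset_Icc_right htT.le))
  have hs : 2 * α - 1 ≠ 0 := fun h => hα (by linarith)
  rw [squareMeasure, Measure.prod_restrict, ← Measure.volume_eq_prod, gMajorant,
    setIntegral_indicator (isClosed_triangle t).measurableSet, Set.inter_eq_right.2 hsub,
    integral_div, setIntegral_triangle ht0 (integrableOn_bIntegrand htT α), bfun, lam]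
  simp only [bIntegrand]
  field_simp

end Majorant

section GKernel

variable {T α t u v : ℝ}

theorem gker_comm (T α t u v : ℝ) : gker T α t u v = gker T α t v u := by
  simp only [gker, max_comm u v, mul_comm ((T - u) ^ (-α)), and_comm (a := u ∈ Set.Icc 0 t)]

theorem measurable_uncurry_gker (T α t : ℝ) : Measurable (Function.uncurry (gker T α t)) := by
  unfold gker Function.uncurry
  refine Measurable.ite ?_ (by fun_prop) measurable_const
  exact measurableSet_Icc.prod measurableSet_Icc

theorem gker_sq_le_of_le (hα : 1 / 2 ≤ α) (hv : 0 ≤ v) (hvu : v ≤ u) (hut : u ≤ t) (htT : t < T) :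
    gker T α t u v ^ 2 ≤ bIntegrand T α (u, v) / |log (T - t)| ^ 2 := by
  have hTu : 0 < T - u := by linarith
  have hTv : 0 < T - v := by linarith
  have hTt : 0 ≤ T - t := by linarith
  have bracket_sq_le : ((T - u) ^ (2 * α - 1) - (T - t) ^ (2 * α - 1)) ^ 2 ≤
      ((T - u) ^ (2 * α - 1)) ^ 2 := by
    have hmono : (T - t) ^ (2 * α - 1) ≤ (T - u) ^ (2 * α - 1) :=
      rpow_le_rpow hTt (by linarith) (by linarith)
    exact pow_le_pow_left₀ (sub_nonneg.2 hmono) (sub_le_self _ (rpow_nonneg hTt _)) 2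
  have hpow : ((T - u) ^ (-α) * (T - v) ^ (-α) * (T - u) ^ (2 * α - 1)) ^ 2 =
      bIntegrand T α (u, v) := by
    simp only [bIntegrand, mul_pow, ← rpow_mul_natCast hTu.le, ← rpow_mul_natCast hTv.le]
    rw [mul_right_comm, ← rpow_add hTu]
    push_cast
    ring_nf
  rw [gker, if_pos ⟨⟨hv.trans hvu, hut⟩, hv, hvu.trans hut⟩, max_eq_left hvu, ← hpow, div_pow]
  gcongr ?_ / _
  rw [mul_pow, mul_pow _ ((T - u) ^ (2 * α - 1))]
  gcongr

theorem gker_sq_le_gMajorant_add_swap (hα : 1 / 2 ≤ α) (htT : t < T) (z : ℝ × ℝ) :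
    Function.uncurry (gker T α t) z ^ 2 ≤ gMajorant T α t z + gMajorant T α t z.swap := by
  have le_of_mem {u v : ℝ} (h : (u, v) ∈ triangle t) :
      gker T α t u v ^ 2 ≤ gMajorant T α t (u, v) := by
    rw [gMajorant, Set.indicator_of_mem h]
    exact gker_sq_le_of_le hα h.1 h.2.1 h.2.2 htT
  obtain ⟨u, v⟩ := z
  have huv : 0 ≤ gMajorant T α t (u, v) := gMajorant_nonneg htT _
  have hvu : 0 ≤ gMajorant T α t (v, u) := gMajorant_nonneg htT _
  simp only [Function.uncurry_apply_pair, Prod.swap_prod_mk]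
  by_cases h : u ∈ Set.Icc 0 t ∧ v ∈ Set.Icc 0 t
  · rcases le_total v u with hle | hle
    · exact (le_of_mem ⟨h.2.1, hle, h.1.2⟩).trans (le_add_of_nonneg_right hvu)
    · rw [gker_comm]
      exact (le_of_mem ⟨h.1.1, hle, h.2.2⟩).trans (le_add_of_nonneg_left huv)
  · rw [gker, if_neg h, zero_pow two_ne_zero]
    exact add_nonneg huv hvu

theorem memLp_two_gker (hα : 1 / 2 ≤ α) (htT : t < T) :
    MemLp (Function.uncurry (gker T α t)) 2 (squareMeasure T) :=
  memLp_two_of_sq_le_add_swap (measurable_uncurry_gker T α t).aestronglyMeasurable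
    (integrable_gMajorant htT) (gker_sq_le_gMajorant_add_swap hα htT)

theorem normSq_gker_le (hα : 1 / 2 < α) (ht0 : 0 ≤ t) (htT : t < T) :
    normSq T (gker T α t) ≤ 2 * (bfun T α t / ((2 * α - 1) * |log (T - t)|)) := by
  rw [← integral_gMajorant hα.ne' ht0 htT, normSq_eq_integral_prod (memLp_two_gker hα.le htT)]
  exact integral_le_two_mul_of_le_add_swap (fun _ => sq_nonneg _) (integrable_gMajorant htT)
    (gker_sq_le_gMajorant_add_swap hα.le htT)

end GKernel

section Asymptotics

variable {T α t : ℝ}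

theorem bfun_eq (hα : α ≠ 1 / 2) (ht0 : 0 ≤ t) (htT : t < T) :
    bfun T α t =
      (log T - log (T - t) - (1 - ((T - t) / T) ^ (2 * α - 1)) / (2 * α - 1)) /
        |log (T - t)| := by
  have hT : 0 < T := ht0.trans_lt htT
  have hs : 2 * α - 1 ≠ 0 := fun h => hα (by linarith)
  have inner : Set.EqOn
      (fun x => ∫ u in (0 : ℝ)..x, (T - x) ^ (2 * α - 2) * (T - u) ^ (-(2 * α)))
      (fun x => ((T - x)⁻¹ - T ^ (-(2 * α - 1)) * (T - x) ^ (2 * α - 1 - 1)) / (2 * α - 1))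
      (Set.uIcc 0 t) := by
    intro x hx
    have hxT : x < T := (Set.uIcc_of_le ht0 ▸ hx).2.trans_lt htT
    have h := integral_const_sub_rpow_mul_rpow hT hxT hs
    ring_nf at h ⊢
    exact h
  have outer := integral_inv_const_sub_sub_rpow hT htT hs
  rw [sub_zero] at outer
  rw [bfun, lam, intervalIntegral.integral_congr inner, intervalIntegral.integral_div, outer]
  field_simp

theorem tendsto_const_sub_nhdsLT (T : ℝ) : Tendsto (fun t => T - t) (𝓝[<] T) (𝓝[>] 0) := by
  refine tendsto_nhdsWithin_iff.2 ⟨?_, ?_⟩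
  · exact ((continuous_sub_left T).tendsto' T 0 (sub_self T)).mono_left nhdsWithin_le_nhds
  · filter_upwards [self_mem_nhdsWithin] with t ht using sub_pos.2 (Set.mem_Iio.1 ht)

theorem tendsto_log_const_sub_nhdsLT (T : ℝ) :
    Tendsto (fun t => log (T - t)) (𝓝[<] T) atBot :=
  tendsto_log_nhdsGT_zero.comp (tendsto_const_sub_nhdsLT T)

theorem tendsto_bfun (hT : 0 < T) (hα : 1 / 2 < α) :
    Tendsto (bfun T α) (𝓝[<] T) (𝓝 1) := by
  have hlog := tendsto_log_const_sub_nhdsLT T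
  have hpow : Tendsto (fun t => ((T - t) / T) ^ (2 * α - 1)) (𝓝[<] T) (𝓝 0) := by
    have hbase : Tendsto (fun t => (T - t) / T) (𝓝[<] T) (𝓝 0) := by
      simpa only [zero_div] using
        ((tendsto_const_sub_nhdsLT T).mono_right nhdsWithin_le_nhds).div_const T
    simpa only [zero_rpow (show 2 * α - 1 ≠ 0 by linarith)] using
      hbase.rpow_const (Or.inr (show 0 ≤ 2 * α - 1 by linarith))
  have hcorr : Tendsto
      (fun t => (log T - (1 - ((T - t) / T) ^ (2 * α - 1)) / (2 * α - 1)) / -log (T - t))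
      (𝓝[<] T) (𝓝 0) :=
    (tendsto_const_nhds.sub ((tendsto_const_nhds.sub hpow).div_const _)).div_atTop
      (tendsto_neg_atBot_atTop.comp hlog)
  have hsum := hcorr.const_add 1
  rw [add_zero] at hsum
  refine hsum.congr' ?_
  filter_upwards [hlog.eventually_lt_atBot 0, Ioo_mem_nhdsLT hT] with t hneg ht
  rw [bfun_eq hα.ne' ht.1.le ht.2, abs_of_neg hneg, add_comm, div_add_one (neg_ne_zero.2 hneg.ne)]
  ring

theorem tendsto_abs_log_const_sub_nhdsLT (T : ℝ) :
    Tendsto (fun t => |log (T - t)|) (𝓝[<] T) atTop :=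
  tendsto_abs_atBot_atTop.comp (tendsto_log_const_sub_nhdsLT T)

end Asymptotics

/-- `ψ₃(t) = (2 / b_t²) √(‖g_t‖⁴ + 2 ‖g_t ⊗₁ g_t‖²)`, the quantity to be estimated. -/
noncomputable def psi3 (T α t : ℝ) : ℝ :=
  (2 / (bfun T α t) ^ 2) *
    √((normSq T (gker T α t)) ^ 2 + 2 * normSq T (contr T (gker T α t) (gker T α t)))

section Rate

variable {T α t : ℝ}

theorem psi3_le (hα : 1 / 2 < α) (ht0 : 0 ≤ t) (htT : t < T) :
    psi3 T α t ≤ 8 / ((2 * α - 1) * |log (T - t)| * bfun T α t) := by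
  calc psi3 T α t ≤ 2 / bfun T α t ^ 2 * (2 * normSq T (gker T α t)) := by
        unfold psi3
        gcongr
        exact sqrt_normSq_sq_add_le (memLp_two_gker hα.le htT)
    _ ≤ 2 / bfun T α t ^ 2 * (2 * (2 * (bfun T α t / ((2 * α - 1) * |log (T - t)|)))) := by
        gcongr
        exact normSq_gker_le hα ht0 htT
    _ = 8 / ((2 * α - 1) * |log (T - t)| * bfun T α t) := by
        field_simp
        norm_num

theorem eventually_psi3_le (hT : 0 < T) (hα : 1 / 2 < α) :
    ∀ᶠ t in 𝓝[<] T, psi3 T α t ≤ 16 / ((2 * α - 1) * |log (T - t)|) := by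
  have hs : 0 < 2 * α - 1 := by linarith
  filter_upwards [Ioo_mem_nhdsLT hT, (tendsto_bfun hT hα).eventually_const_le one_half_lt_one,
    (tendsto_abs_log_const_sub_nhdsLT T).eventually_gt_atTop 0] with t ht hb hlog
  calc psi3 T α t ≤ 8 / ((2 * α - 1) * |log (T - t)| * bfun T α t) := psi3_le hα ht.1.le ht.2
    _ ≤ 8 / ((2 * α - 1) * |log (T - t)| * (1 / 2)) := by gcongr
    _ = 16 / ((2 * α - 1) * |log (T - t)|) := by field_simp; norm_num

theorem eventually_psi3_le_div_lam_rpow (hT : 0 < T) (hα : 1 / 2 < α) {r : ℝ} (hr : r ≤ 1) :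
    ∀ᶠ t in 𝓝[<] T, psi3 T α t ≤ 16 / (2 * α - 1) ^ 2 / lam T α t ^ r := by
  have hs : 0 < 2 * α - 1 := by linarith
  filter_upwards [eventually_psi3_le hT hα, ((tendsto_abs_log_const_sub_nhdsLT T).atTop_div_const
    hs).eventually_ge_atTop 1] with t hψ hlam
  calc psi3 T α t ≤ 16 / ((2 * α - 1) * |log (T - t)|) := hψ
    _ = 16 / (2 * α - 1) ^ 2 / lam T α t := by rw [lam]; field_simp
    _ ≤ 16 / (2 * α - 1) ^ 2 / lam T α t ^ r := by
        have hpos : 0 < lam T α t ^ r := rpow_pos_of_pos (one_pos.trans_le hlam) r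
        have hle : lam T α t ^ r ≤ lam T α t := rpow_le_self_of_one_le hlam hr
        exact div_le_div_of_nonneg_left (by positivity) hpos hle

theorem eventually_psi3_le_div_sqrt_abs_log (hT : 0 < T) (hα : 1 / 2 < α) :
    ∀ᶠ t in 𝓝[<] T, psi3 T α t ≤ 16 / (2 * α - 1) / √|log (T - t)| := by
  have hs : 0 < 2 * α - 1 := by linarith
  filter_upwards [eventually_psi3_le hT hα,
    (tendsto_abs_log_const_sub_nhdsLT T).eventually_ge_atTop 1] with t hψ hlog
  calc psi3 T α t ≤ 16 / ((2 * α - 1) * |log (T - t)|) := hψ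
    _ = 16 / (2 * α - 1) / |log (T - t)| := by rw [div_div]
    _ ≤ 16 / (2 * α - 1) / √|log (T - t)| := by
        have hle : √|log (T - t)| ≤ |log (T - t)| := sqrt_le_self_iff.2 (Or.inr hlog)
        gcongr

end Rate

theorem stmt_16 (T α : ℝ) (hT : 0 < T) (hα : 1 / 2 < α) :
    ∃ C > 0, ∃ t₀ : ℝ, max 0 (T - 1 / Real.exp 1) < t₀ ∧ t₀ < T ∧
      ∀ t : ℝ, t₀ < t → t < T →
        (2 / (bfun T α t) ^ 2) *
            Real.sqrt ((normSq T (gker T α t)) ^ 2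
              + 2 * normSq T (contr T (gker T α t) (gker T α t)))
          ≤ C / (lam T α t) ^ ((3 : ℝ) / 4)
        ∧
        (2 / (bfun T α t) ^ 2) *
            Real.sqrt ((normSq T (gker T α t)) ^ 2
              + 2 * normSq T (contr T (gker T α t) (gker T α t)))
          ≤ C / Real.sqrt |Real.log (T - t)| := by
  have hs : 0 < 2 * α - 1 := by linarith
  obtain ⟨t₁, ht₁, ht₁T⟩ : ∃ t₁, max 0 (T - 1 / exp 1) < t₁ ∧ t₁ < T :=
    exists_between (max_lt hT (sub_lt_self T (by positivity)))
  obtain ⟨t₀, ⟨ht₁₀, ht₀T⟩, hψ⟩ := (mem_nhdsLT_iff_exists_mem_Ico_Ioo_subset ht₁T).1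
    ((eventually_psi3_le_div_lam_rpow hT hα (r := 3 / 4) (by norm_num)).and
      (eventually_psi3_le_div_sqrt_abs_log hT hα))
  refine ⟨max (16 / (2 * α - 1) ^ 2) (16 / (2 * α - 1)), by positivity, t₀,
    ht₁.trans_le ht₁₀, ht₀T, fun t ht htT => ?_⟩
  obtain ⟨hlam, hlog⟩ := hψ ⟨ht, htT⟩
  have hlam_nonneg : 0 ≤ lam T α t := div_nonneg (abs_nonneg _) hs.le
  exact ⟨hlam.trans (by gcongr; exact le_max_left _ _),
    hlog.trans (by gcongr; exact le_max_right _ _)⟩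
end
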